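/- Let u^n, u : [0,1] → ℝ be uniformly bounded measurable functions with u^n → u weakly in L¹(0,1) (i.e., ∫ φ u^n → ∫ φ u for all bounded measurable φ). Let g : ℝᵈ → ℝᵈ be bounded and Lipschitz, and let x^n, x solve x'(t) = u^n(t) g(x^n(t)), x'(t) = u(t) g(x(t)) with x^n(0) = x(0) = x₀. Then x^n(1) → x(1). -/

import Mathlib

/-!
Put `f = g ∘ x`. Testing `uⁿ → u` against indicators, and approximating `f` in `L¹` by simple
functions, gives `∫₀ᵗ uⁿ f → ∫₀ᵗ u f` for each `t`; the primitives share a Lipschitz constant, so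
the convergence is uniform in `t`. Thus `x` solves the integral equation driven by `uⁿ` up to a
uniformly small defect, and Grönwall's inequality turns that defect into a bound on `xⁿ - x`.
-/

open MeasureTheory Set Filter Topology
open scoped NNReal

variable {ι α E : Type*} [NormedAddCommGroup E] [NormedSpace ℝ E] {l : Filter ι}

section WeakConvergence

variable {mα : MeasurableSpace α} {μ : Measure α} {u : ι → α → ℝ} {v : α → ℝ}

/-- The family `u` converges to `v` along `l` when tested against indicators of measurable sets.
For uniformly bounded functions on a finite measure space this is weak convergence in `L¹`. The
limit `v` is not required to be integrable, so a priori its integrals may take the junk value `0`;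
`TendstoSetIntegral.ae_le` rules this out for bounded `u`. -/
def TendstoSetIntegral (μ : Measure α) (u : ι → α → ℝ) (l : Filter ι) (v : α → ℝ) : Prop :=
  ∀ s, MeasurableSet s → Tendsto (fun i => ∫ a in s, u i a ∂μ) l (𝓝 (∫ a in s, v a ∂μ))

theorem tendstoSetIntegral_of_forall_bounded
    (h : ∀ φ : α → ℝ, Measurable φ → (∃ C, ∀ a, |φ a| ≤ C) →
      Tendsto (fun i => ∫ a, φ a * u i a ∂μ) l (𝓝 (∫ a, φ a * v a ∂μ))) :
    TendstoSetIntegral μ u l v := by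
  intro s hs
  have hφ := h (s.indicator 1) (measurable_one.indicator hs)
    ⟨1, fun a => by by_cases ha : a ∈ s <;> simp [ha]⟩
  have h_integral (w : α → ℝ) : ∫ a, s.indicator 1 a * w a ∂μ = ∫ a in s, w a ∂μ := by
    simp_rw [← indicator_mul_left, Pi.one_apply, one_mul, integral_indicator hs]
  simpa only [h_integral] using hφ

namespace TendstoSetIntegral

theorem neg (h : TendstoSetIntegral μ u l v) :
    TendstoSetIntegral μ (fun i a => -u i a) l (fun a => -v a) := fun s hs => by
  simpa only [integral_neg] using (h s hs).neg

theorem restrict (h : TendstoSetIntegral μ u l v) {t : Set α} (ht : MeasurableSet t) :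
    TendstoSetIntegral (μ.restrict t) u l v := fun s hs => by
  simpa only [Measure.restrict_restrict hs] using h (s ∩ t) (hs.inter ht)

theorem ae_le_of_integrable [l.NeBot] [IsFiniteMeasure μ] {M : ℝ}
    (h : TendstoSetIntegral μ u l v) (hu : ∀ i, Integrable (u i) μ)
    (huM : ∀ i, ∀ᵐ a ∂μ, u i a ≤ M) (hv : Integrable v μ) : ∀ᵐ a ∂μ, v a ≤ M :=
  ae_le_of_forall_setIntegral_le hv (integrable_const M) fun s hs _ =>
    le_of_tendsto' (h s hs) fun i => setIntegral_mono_ae (hu i).integrableOn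
      (integrable_const M).integrableOn (huM i)

theorem ae_le [l.NeBot] [IsFiniteMeasure μ] {M : ℝ} (h : TendstoSetIntegral μ u l v)
    (hu : ∀ i, Integrable (u i) μ) (huM : ∀ i, ∀ᵐ a ∂μ, u i a ≤ M) (hv : Measurable v) :
    ∀ᵐ a ∂μ, v a ≤ M := by
  let B (k : ℕ) : Set α := {a | |v a| ≤ k}
  have hB (k : ℕ) : MeasurableSet (B k) := measurableSet_le hv.abs measurable_const
  have h_cover : ⋃ k, B k = univ := iUnion_eq_univ_iff.2 fun a => exists_nat_ge |v a|
  rw [← Measure.restrict_univ (μ := μ), ← h_cover, ae_restrict_iUnion_iff]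
  intro k
  have hv_int : IntegrableOn v (B k) μ :=
    Integrable.of_bound hv.aestronglyMeasurable k (ae_restrict_mem (hB k))
  exact (h.restrict (hB k)).ae_le_of_integrable (fun i => (hu i).restrict)
    (fun i => ae_restrict_of_ae (huM i)) hv_int

theorem ae_norm_le [l.NeBot] [IsFiniteMeasure μ] {M : ℝ} (h : TendstoSetIntegral μ u l v)
    (hu : ∀ i, AEStronglyMeasurable (u i) μ) (huM : ∀ i, ∀ᵐ a ∂μ, ‖u i a‖ ≤ M)
    (hv : Measurable v) : ∀ᵐ a ∂μ, ‖v a‖ ≤ M := by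
  have hu_int (i : ι) : Integrable (u i) μ := .of_bound (hu i) M (huM i)
  have h_upper := h.ae_le hu_int (fun i => (huM i).mono fun a ha => (abs_le.1 ha).2) hv
  have h_lower := h.neg.ae_le (fun i => (hu_int i).neg)
    (fun i => (huM i).mono fun a ha => neg_le.1 (abs_le.1 ha).1) hv.neg
  filter_upwards [h_upper, h_lower] with a h_le h_ge
  exact abs_le.2 ⟨neg_le.1 h_ge, h_le⟩

end TendstoSetIntegral

theorem lipschitzWith_integral_smul {w : α → ℝ} {M : ℝ≥0} (hw : AEStronglyMeasurable w μ)
    (hwM : ∀ᵐ a ∂μ, ‖w a‖ ≤ M) : LipschitzWith M fun f : α →₁[μ] E => ∫ a, w a • f a ∂μ := by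
  refine .of_dist_le_mul fun f g => ?_
  have h_int (f : α →₁[μ] E) : Integrable (fun a => w a • f a) μ :=
    (L1.integrable_coeFn f).bdd_smul M hw hwM
  rw [dist_eq_norm, dist_eq_norm, ← integral_sub (h_int f) (h_int g), L1.norm_eq_integral_norm,
    ← integral_const_mul]
  refine norm_integral_le_of_norm_le ((L1.integrable_coeFn (f - g)).norm.const_mul _) ?_
  filter_upwards [hwM, Lp.coeFn_sub f g] with a ha h_sub
  rw [← smul_sub, norm_smul, h_sub, Pi.sub_apply]
  gcongr

theorem TendstoSetIntegral.tendsto_integral_smul [CompleteSpace E] {M : ℝ≥0}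
    (h : TendstoSetIntegral μ u l v)
    (hu : ∀ i, AEStronglyMeasurable (u i) μ) (huM : ∀ i, ∀ᵐ a ∂μ, ‖u i a‖ ≤ M)
    (hv : AEStronglyMeasurable v μ) (hvM : ∀ᵐ a ∂μ, ‖v a‖ ≤ M) {f : α → E} (hf : Integrable f μ) :
    Tendsto (fun i => ∫ a, u i a • f a ∂μ) l (𝓝 (∫ a, v a • f a ∂μ)) := by
  refine Integrable.induction
    (P := fun f => Tendsto (fun i => ∫ a, u i a • f a ∂μ) l (𝓝 (∫ a, v a • f a ∂μ)))
    ?indicator ?add ?closed ?congr hf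
  case indicator =>
    intro c s hs _
    have h_integral (w : α → ℝ) :
        ∫ a, w a • s.indicator (fun _ => c) a ∂μ = (∫ a in s, w a ∂μ) • c := by
      simp_rw [← indicator_smul_apply, integral_indicator hs, integral_smul_const]
    simpa only [h_integral] using (h s hs).smul_const c
  case add =>
    intro f g _ hf hg ihf ihg
    have h_integral {w : α → ℝ} (hw : AEStronglyMeasurable w μ) (hwM : ∀ᵐ a ∂μ, ‖w a‖ ≤ M) :
        ∫ a, w a • (f + g) a ∂μ = ∫ a, w a • f a ∂μ + ∫ a, w a • g a ∂μ := by
      simp_rw [Pi.add_apply, smul_add]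
      exact integral_add (hf.bdd_smul M hw hwM) (hg.bdd_smul M hw hwM)
    simpa only [h_integral hv hvM, h_integral (hu _) (huM _)] using ihf.add ihg
  case closed =>
    exact (LipschitzWith.uniformEquicontinuous _ M fun i =>
      lipschitzWith_integral_smul (hu i) (huM i)).equicontinuous.isClosed_setOfPred_tendsto
        (lipschitzWith_integral_smul hv hvM).continuous
  case congr =>
    intro f g hfg _ ihf
    have h_integral (w : α → ℝ) : ∫ a, w a • f a ∂μ = ∫ a, w a • g a ∂μ :=
      integral_congr_ae (hfg.mono fun a ha => congrArg (w a • ·) ha)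
    simpa only [h_integral] using ihf

end WeakConvergence

section Primitives

theorem tendstoUniformlyOn_of_equicontinuousOn {X β : Type*} [TopologicalSpace X]
    [UniformSpace β] {F : ι → X → β} {f : X → β} {s : Set X} (hs : IsCompact s)
    (hF : EquicontinuousOn F s) (h : ∀ x ∈ s, Tendsto (F · x) l (𝓝 (f x))) :
    TendstoUniformlyOn F f l s := by
  have h_pi : Tendsto ((⋃₀ {s}).domRestrict ∘ F) l (𝓝 ((⋃₀ {s}).domRestrict f)) :=
    tendsto_pi_nhds.2 fun x => h x (by simpa using x.2)
  have h_uniform := (EquicontinuousOn.tendsto_uniformOnFun_iff_pi' (𝔖 := {s})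
    (by simpa using hs) (by simpa using hF) l f).2 h_pi
  exact UniformOnFun.tendsto_iff_tendstoUniformlyOn.1 h_uniform s rfl

variable {a b : ℝ}

theorem intervalIntegrable_of_integrableOn_Icc {F : Type*} [NormedAddCommGroup F] {f : ℝ → F}
    (hf : IntegrableOn f (Icc a b)) {s t : ℝ} (hs : s ∈ Icc a b) (ht : t ∈ Icc a b) :
    IntervalIntegrable f volume s t :=
  (hf.mono_set (ordConnected_Icc.uIcc_subset hs ht)).intervalIntegrable

theorem lipschitzOnWith_primitive {f : ℝ → E} {C : ℝ≥0} (hf : IntegrableOn f (Icc a b))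
    (hfC : ∀ᵐ t ∂volume.restrict (Icc a b), ‖f t‖ ≤ C) :
    LipschitzOnWith C (fun t => ∫ s in a..t, f s) (Icc a b) := by
  refine .of_dist_le_mul fun s hs t ht => ?_
  have ha : a ∈ Icc a b := ⟨le_rfl, hs.1.trans hs.2⟩
  rw [dist_eq_norm, intervalIntegral.integral_interval_sub_left
    (intervalIntegrable_of_integrableOn_Icc hf ha hs)
    (intervalIntegrable_of_integrableOn_Icc hf ha ht), Real.dist_eq]
  refine intervalIntegral.norm_integral_le_of_norm_le_const_ae ?_
  filter_upwards [(ae_restrict_iff' measurableSet_Icc).1 hfC] with r hr hr_mem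
  exact hr (ordConnected_Icc.uIcc_subset ht hs (uIoc_subset_uIcc hr_mem))

theorem TendstoSetIntegral.tendstoUniformlyOn_primitive_smul [CompleteSpace E]
    {u : ι → ℝ → ℝ} {v : ℝ → ℝ} {M C : ℝ≥0}
    (h : TendstoSetIntegral (volume.restrict (Icc a b)) u l v)
    (hu : ∀ i, AEStronglyMeasurable (u i) (volume.restrict (Icc a b)))
    (huM : ∀ i, ∀ᵐ t ∂volume.restrict (Icc a b), ‖u i t‖ ≤ M)
    (hv : AEStronglyMeasurable v (volume.restrict (Icc a b)))
    (hvM : ∀ᵐ t ∂volume.restrict (Icc a b), ‖v t‖ ≤ M)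
    {f : ℝ → E} (hf : IntegrableOn f (Icc a b))
    (hfC : ∀ᵐ t ∂volume.restrict (Icc a b), ‖f t‖ ≤ C) :
    TendstoUniformlyOn (fun i t => ∫ s in a..t, u i s • f s) (fun t => ∫ s in a..t, v s • f s)
      l (Icc a b) := by
  refine tendstoUniformlyOn_of_equicontinuousOn isCompact_Icc ?_ fun t ht => ?_
  · refine (LipschitzOnWith.uniformEquicontinuousOn _ (M * C) fun i => ?_).equicontinuousOn
    refine lipschitzOnWith_primitive (hf.bdd_smul M (hu i) (huM i)) ?_
    filter_upwards [huM i, hfC] with s hus hfs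
    rw [norm_smul, NNReal.coe_mul]
    gcongr
  · have h_sub : Ioc a t ⊆ Icc a b := fun s hs => ⟨hs.1.le, hs.2.trans ht.2⟩
    have h_restrict : (volume.restrict (Icc a b)).restrict (Ioc a t) = volume.restrict (Ioc a t) :=
      Measure.restrict_restrict_of_subset h_sub
    have h_mono := Measure.restrict_mono_set volume h_sub
    simp_rw [intervalIntegral.integral_of_le ht.1]
    exact (h_restrict ▸ h.restrict measurableSet_Ioc).tendsto_integral_smul
      (fun i => (hu i).mono_measure h_mono) (fun i => ae_mono h_mono (huM i))
      (hv.mono_measure h_mono) (ae_mono h_mono hvM) (hf.mono_set h_sub)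

end Primitives

section IntegralEquations

variable {a b : ℝ}

theorem le_mul_exp_of_le_add_mul_integral {w : ℝ → ℝ} {ε K : ℝ} (hK : 0 ≤ K)
    (hw : ContinuousOn w (Icc a b)) (h : ∀ t ∈ Icc a b, w t ≤ ε + K * ∫ s in a..t, w s) :
    ∀ t ∈ Icc a b, w t ≤ ε * Real.exp (K * (t - a)) := by
  have h_deriv : ∀ t ∈ Icc a b,
      HasDerivWithinAt (fun t => ε + K * ∫ s in a..t, w s) (K * w t) (Icc a b) t := by
    intro t ht
    have : Fact (t ∈ Icc a b) := ⟨ht⟩ -- needed to synthesise `FTCFilter`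
    have hw_int := intervalIntegrable_of_integrableOn_Icc hw.integrableOn_Icc
      (left_mem_Icc.2 (ht.1.trans ht.2)) ht
    exact (intervalIntegral.integral_hasDerivWithinAt_right hw_int
      (hw.stronglyMeasurableAtFilter_nhdsWithin measurableSet_Icc t) (hw t ht)).const_mul K
        |>.const_add ε
  intro t ht
  refine (h t ht).trans ?_
  rw [← gronwallBound_ε0]
  refine le_gronwallBound_of_liminf_deriv_right_le (f' := fun t => K * w t)
    (fun s hs => (h_deriv s hs).continuousWithinAt) (fun s hs r hr => ?_) (by simp)
    (fun s hs => ?_) t ht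
  · exact ((h_deriv s (Ico_subset_Icc_self hs)).mono_of_mem_nhdsWithin
      (Icc_mem_nhdsGE_of_mem hs)).liminf_right_slope_le hr
  · simpa using mul_le_mul_of_nonneg_left (h s (Ico_subset_Icc_self hs)) hK

theorem norm_sub_le_of_eqOn_picard {f : ℝ → E → E} {K : ℝ≥0} {x y : ℝ → E} {y₀ : E} {ε : ℝ}
    (hf : ∀ᵐ t ∂volume.restrict (Icc a b), LipschitzWith K (f t))
    (hx : ContinuousOn x (Icc a b)) (hy : ContinuousOn y (Icc a b))
    (hfx : IntegrableOn (fun t => f t (x t)) (Icc a b))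
    (hfy : IntegrableOn (fun t => f t (y t)) (Icc a b))
    (h_sol : EqOn y (ODE.picard f a y₀ y) (Icc a b))
    (h_defect : ∀ t ∈ Icc a b, ‖ODE.picard f a y₀ x t - x t‖ ≤ ε) :
    ∀ t ∈ Icc a b, ‖y t - x t‖ ≤ ε * Real.exp (K * (t - a)) := by
  refine le_mul_exp_of_le_add_mul_integral K.2 (hy.sub hx).norm fun t ht => ?_
  have ha : a ∈ Icc a b := left_mem_Icc.2 (ht.1.trans ht.2)
  have h_split : y t - x t =
      (ODE.picard f a y₀ x t - x t) + ∫ s in a..t, (f s (y s) - f s (x s)) := by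
    rw [intervalIntegral.integral_sub (intervalIntegrable_of_integrableOn_Icc hfy ha ht)
      (intervalIntegrable_of_integrableOn_Icc hfx ha ht), h_sol ht, ODE.picard_apply,
      ODE.picard_apply]
    abel
  have h_integral : ‖∫ s in a..t, (f s (y s) - f s (x s))‖ ≤ K * ∫ s in a..t, ‖y s - x s‖ := by
    rw [← intervalIntegral.integral_const_mul]
    refine intervalIntegral.norm_integral_le_of_norm_le ht.1 ?_
      (intervalIntegrable_of_integrableOn_Icc (hy.sub hx).norm.integrableOn_Icc ha ht
        |>.const_mul _)
    filter_upwards [(ae_restrict_iff' measurableSet_Icc).1 hf] with s hs hs_mem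
    exact (hs ⟨hs_mem.1.le, hs_mem.2.trans ht.2⟩).norm_sub_le _ _
  rw [h_split]
  exact (norm_add_le _ _).trans (add_le_add (h_defect t ht) h_integral)

theorem TendstoSetIntegral.tendstoUniformlyOn_picard [CompleteSpace E]
    {u : ι → ℝ → ℝ} {v : ℝ → ℝ} {M : ℝ≥0}
    (h : TendstoSetIntegral (volume.restrict (Icc a b)) u l v)
    (hu : ∀ i, AEStronglyMeasurable (u i) (volume.restrict (Icc a b)))
    (huM : ∀ i, ∀ᵐ t ∂volume.restrict (Icc a b), ‖u i t‖ ≤ M)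
    (hv : AEStronglyMeasurable v (volume.restrict (Icc a b)))
    (hvM : ∀ᵐ t ∂volume.restrict (Icc a b), ‖v t‖ ≤ M)
    {g : E → E} {x : ℝ → E} (hgx : ContinuousOn (g ∘ x) (Icc a b))
    {y₀ : ι → E} {x₀ : E} (hy₀ : Tendsto y₀ l (𝓝 x₀)) :
    TendstoUniformlyOn (fun i => ODE.picard (fun t z => u i t • g z) a (y₀ i) x)
      (ODE.picard (fun t z => v t • g z) a x₀ x) l (Icc a b) := by
  obtain ⟨C, hC⟩ := isCompact_Icc.exists_bound_of_continuousOn hgx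
  have hC' : ∀ᵐ t ∂volume.restrict (Icc a b), ‖(g ∘ x) t‖ ≤ C.toNNReal :=
    ae_restrict_of_forall_mem measurableSet_Icc fun t ht =>
      (hC t ht).trans (Real.le_coe_toNNReal C)
  exact (hy₀.tendstoUniformlyOn_const _).add
    (h.tendstoUniformlyOn_primitive_smul hu huM hv hvM hgx.integrableOn_Icc hC')

theorem tendstoUniformlyOn_of_eqOn_picard {f : ι → ℝ → E → E} {K : ℝ≥0} {x : ℝ → E}
    {y : ι → ℝ → E} {y₀ : ι → E}
    (hf : ∀ i, ∀ᵐ t ∂volume.restrict (Icc a b), LipschitzWith K (f i t))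
    (hx : ContinuousOn x (Icc a b)) (hy : ∀ i, ContinuousOn (y i) (Icc a b))
    (hfx : ∀ i, IntegrableOn (fun t => f i t (x t)) (Icc a b))
    (hfy : ∀ i, IntegrableOn (fun t => f i t (y i t)) (Icc a b))
    (h_sol : ∀ i, EqOn (y i) (ODE.picard (f i) a (y₀ i) (y i)) (Icc a b))
    (h_defect : TendstoUniformlyOn (fun i => ODE.picard (f i) a (y₀ i) x) x l (Icc a b)) :
    TendstoUniformlyOn y x l (Icc a b) := by
  rw [Metric.tendstoUniformlyOn_iff] at h_defect ⊢
  intro η hη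
  let ε : ℝ := η / 2 * Real.exp (-(K * (b - a)))
  filter_upwards [h_defect ε (by positivity)] with i hi t ht
  simp_rw [dist_comm (x _), dist_eq_norm] at hi ⊢
  calc ‖y i t - x t‖ ≤ ε * Real.exp (K * (t - a)) :=
        norm_sub_le_of_eqOn_picard (hf i) hx (hy i) (hfx i) (hfy i) (h_sol i)
          (fun s hs => (hi s hs).le) t ht
    _ ≤ ε * Real.exp (K * (b - a)) := by gcongr; exact ht.2
    _ = η / 2 := by rw [mul_assoc, ← Real.exp_add, neg_add_cancel, Real.exp_zero, mul_one]
    _ < η := half_lt_self hη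

theorem eqOn_picard_of_isIntegralCurveOn [CompleteSpace E] {f : ℝ → E → E} {x : ℝ → E}
    (hx : IsIntegralCurveOn x f (Icc a b)) (hfx : IntegrableOn (fun t => f t (x t)) (Icc a b)) :
    EqOn x (ODE.picard f a (x a) x) (Icc a b) := by
  intro t ht
  have h_ftc : ∫ s in a..t, f s (x s) = x t - x a := by
    refine intervalIntegral.integral_eq_sub_of_hasDeriv_right_of_le ht.1
      (fun s hs => (hx s ⟨hs.1, hs.2.trans ht.2⟩).continuousWithinAt.mono
        (Icc_subset_Icc_right ht.2)) (fun s hs => ?_)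
      (intervalIntegrable_of_integrableOn_Icc hfx (left_mem_Icc.2 (ht.1.trans ht.2)) ht)
    have hs' : s ∈ Ico a b := ⟨hs.1.le, hs.2.trans_le ht.2⟩
    exact (hx s (Ico_subset_Icc_self hs')).mono_of_mem_nhdsWithin (Icc_mem_nhdsGT_of_mem hs')
  rw [ODE.picard_apply, h_ftc, add_sub_cancel]

end IntegralEquations

theorem stmt_14_general [l.NeBot] [CompleteSpace E] {a b : ℝ} {M L : ℝ≥0}
    {u : ι → ℝ → ℝ} {v : ℝ → ℝ}
    (hu : ∀ i, AEStronglyMeasurable (u i) (volume.restrict (Icc a b)))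
    (huM : ∀ i, ∀ᵐ t ∂volume.restrict (Icc a b), ‖u i t‖ ≤ M) (hv : Measurable v)
    (huv : TendstoSetIntegral (volume.restrict (Icc a b)) u l v)
    {g : E → E} (hg : LipschitzWith L g) {y : ι → ℝ → E} {x : ℝ → E}
    (hy : ∀ i, IsIntegralCurveOn (y i) (fun t z => u i t • g z) (Icc a b))
    (hx : IsIntegralCurveOn x (fun t z => v t • g z) (Icc a b))
    (hyx : Tendsto (fun i => y i a) l (𝓝 (x a))) :
    TendstoUniformlyOn y x l (Icc a b) := by
  have hvM := huv.ae_norm_le hu huM hv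
  have hv' : AEStronglyMeasurable v (volume.restrict (Icc a b)) := hv.aestronglyMeasurable
  have hx_cont : ContinuousOn x (Icc a b) := fun t ht => (hx t ht).continuousWithinAt
  have hy_cont (i : ι) : ContinuousOn (y i) (Icc a b) := fun t ht =>
    (hy i t ht).continuousWithinAt
  have hg_int {w : ℝ → ℝ} (hw : AEStronglyMeasurable w (volume.restrict (Icc a b)))
      (hwM : ∀ᵐ t ∂volume.restrict (Icc a b), ‖w t‖ ≤ M) {z : ℝ → E}
      (hz : ContinuousOn z (Icc a b)) : IntegrableOn (fun t => w t • g (z t)) (Icc a b) :=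
    (hg.continuous.comp_continuousOn hz).integrableOn_Icc.bdd_smul M hw hwM
  have hf (i : ι) : ∀ᵐ t ∂volume.restrict (Icc a b),
      LipschitzWith (M * L) (fun z => u i t • g z) :=
    (huM i).mono fun t ht =>
      ((lipschitzWith_smul (u i t)).comp hg).weaken (by gcongr; exact ht)
  have h_defect : TendstoUniformlyOn
      (fun i => ODE.picard (fun t z => u i t • g z) a (y i a) x) x l (Icc a b) :=
    (huv.tendstoUniformlyOn_picard hu huM hv' hvM (hg.continuous.comp_continuousOn hx_cont)
      hyx).congr_right (eqOn_picard_of_isIntegralCurveOn hx (hg_int hv' hvM hx_cont)).symm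
  exact tendstoUniformlyOn_of_eqOn_picard hf hx_cont hy_cont
    (fun i => hg_int (hu i) (huM i) hx_cont) (fun i => hg_int (hu i) (huM i) (hy_cont i))
    (fun i => eqOn_picard_of_isIntegralCurveOn (hy i) (hg_int (hu i) (huM i) (hy_cont i))) h_defect

theorem stmt_14 (d : ℕ) (u : ℕ → ℝ → ℝ) (ulim : ℝ → ℝ)
    (hmeas : ∀ n, Measurable (u n)) (hmeas' : Measurable ulim)
    (hbdd : ∃ M : ℝ, ∀ n t, |u n t| ≤ M)
    (hweak : ∀ φ : ℝ → ℝ, Measurable φ → (∃ C, ∀ t, |φ t| ≤ C) →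
      Filter.Tendsto (fun n => ∫ t in Set.Icc (0:ℝ) 1, φ t * u n t)
        Filter.atTop (nhds (∫ t in Set.Icc (0:ℝ) 1, φ t * ulim t)))
    (g : EuclideanSpace ℝ (Fin d) → EuclideanSpace ℝ (Fin d))
    (Lg : NNReal) (hgLip : LipschitzWith Lg g) (hgbdd : ∃ Mg : ℝ, ∀ z, ‖g z‖ ≤ Mg)
    (xn : ℕ → ℝ → EuclideanSpace ℝ (Fin d)) (x : ℝ → EuclideanSpace ℝ (Fin d))
    (x₀ : EuclideanSpace ℝ (Fin d))
    (hxn : ∀ n, ∀ t ∈ Set.Icc (0:ℝ) 1, HasDerivAt (xn n) (u n t • g (xn n t)) t)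
    (hx : ∀ t ∈ Set.Icc (0:ℝ) 1, HasDerivAt x (ulim t • g (x t)) t)
    (hinit : (∀ n, xn n 0 = x₀) ∧ x 0 = x₀) :
    Filter.Tendsto (fun n => xn n 1) Filter.atTop (nhds (x 1)) := by
  obtain ⟨M, hM⟩ := hbdd
  have hM' (n : ℕ) (t : ℝ) : ‖u n t‖ ≤ M.toNNReal := (hM n t).trans (Real.le_coe_toNNReal M)
  exact (stmt_14_general (fun n => (hmeas n).aestronglyMeasurable) (fun n => ae_of_all _ (hM' n))
    hmeas' (tendstoSetIntegral_of_forall_bounded hweak) hgLip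
    (fun n t ht => (hxn n t ht).hasDerivWithinAt) (fun t ht => (hx t ht).hasDerivWithinAt)
    (by simp only [hinit.1, hinit.2, tendsto_const_nhds])).tendsto_at (right_mem_Icc.2 zero_le_one)
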